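/- arXiv:2407.21175 — 2 statements merged into one kernel-verified Lean document; each statement's English description precedes it below -/
import Mathlib

section
/- In N(n), suppose 1 ≤ i < j ≤ n and 0 < k' < k ≤ j − i. Then Y_{[i,j];k} Y_{[i,i+k−1];k'} = Y_{[i,j];k'} Y_{[i+k',j];k−k'}. -/
/-- Index type for the generators `Y_1, …, Y_{n-1}` of the nilCoxeter algebra `N(n)`. -/
abbrev NIdx (n : ℕ) := {i : ℕ // 1 ≤ i ∧ i + 1 ≤ n}

/-- The generator `Y_i` in the free algebra (junk value `0` outside `1 ≤ i ≤ n-1`). -/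
noncomputable def Yf (n : ℕ) (i : ℕ) : FreeAlgebra ℤ (NIdx n) :=
  if h : 1 ≤ i ∧ i + 1 ≤ n then FreeAlgebra.ι ℤ ⟨i, h⟩ else 0

/-- The defining relations of the nilCoxeter algebra `N(n)` of the symmetric group `S_n`:
`Y_i² = 0`, the braid relations `Y_i Y_{i+1} Y_i = Y_{i+1} Y_i Y_{i+1}`, and the
commutation relations `Y_i Y_j = Y_j Y_i` for `|i - j| ≥ 2`. -/
inductive NRel (n : ℕ) : FreeAlgebra ℤ (NIdx n) → FreeAlgebra ℤ (NIdx n) → Prop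
  | sq (i : NIdx n) : NRel n (FreeAlgebra.ι ℤ i * FreeAlgebra.ι ℤ i) 0
  | braid (i j : NIdx n) (h : j.1 = i.1 + 1) :
      NRel n (FreeAlgebra.ι ℤ i * FreeAlgebra.ι ℤ j * FreeAlgebra.ι ℤ i)
        (FreeAlgebra.ι ℤ j * FreeAlgebra.ι ℤ i * FreeAlgebra.ι ℤ j)
  | comm (i j : NIdx n) (h : i.1 + 2 ≤ j.1 ∨ j.1 + 2 ≤ i.1) :
      NRel n (FreeAlgebra.ι ℤ i * FreeAlgebra.ι ℤ j)
        (FreeAlgebra.ι ℤ j * FreeAlgebra.ι ℤ i)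

/-- The nilCoxeter algebra `N(n)` of the symmetric group `S_n` over `ℤ`. -/
abbrev Nring (n : ℕ) := RingQuot (NRel n)

/-- The image of the generator `Y_i` in `N(n)`. -/
noncomputable def Ygen (n : ℕ) (i : ℕ) : Nring n :=
  RingQuot.mkRingHom (NRel n) (Yf n i)

/-- `Y_{[i,j]} = Y_{j-1} Y_{j-2} ⋯ Y_{i+1} Y_i`, with `Y_{[i,i]} = 1`. -/
noncomputable def Yint (n : ℕ) (i j : ℕ) : Nring n :=
  (((List.range' i (j - i)).reverse).map (Ygen n)).prod

/-- `Y_{[i,j];k} = Y_{[i,j+1-k]} Y_{[i+1,j+2-k]} ⋯ Y_{[i+k-1,j]}`, with `Y_{[i,j];0} = 1`. -/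
noncomputable def Yintk (n : ℕ) (i j k : ℕ) : Nring n :=
  ((List.range k).map fun t => Yint n (i + t) (j + 1 - k + t)).prod

theorem Ygen_braid (n a : ℕ) :
    Ygen n a * Ygen n (a+1) * Ygen n a = Ygen n (a+1) * Ygen n a * Ygen n (a+1) := by
  unfold Ygen Yf
  by_cases h : 1 ≤ a ∧ a + 1 ≤ n
  · by_cases h' : 1 ≤ a + 1 ∧ a + 1 + 1 ≤ n
    · rw [dif_pos h, dif_pos h']
      have := RingQuot.mkRingHom_rel (NRel.braid (n := n) ⟨a, h⟩ ⟨a+1, h'⟩ rfl)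
      simpa only [map_mul] using this
    · rw [dif_neg h']; simp
  · rw [dif_neg h]; simp

theorem Ygen_comm (n a b : ℕ) (hab : a + 2 ≤ b) : Commute (Ygen n a) (Ygen n b) := by
  unfold Ygen Yf
  by_cases h : 1 ≤ a ∧ a + 1 ≤ n
  · by_cases h' : 1 ≤ b ∧ b + 1 ≤ n
    · rw [dif_pos h, dif_pos h']
      have := RingQuot.mkRingHom_rel (NRel.comm (n := n) ⟨a, h⟩ ⟨b, h'⟩ (Or.inl hab))
      simpa only [map_mul, commute_iff_eq] using this
    · rw [dif_neg h']; simp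
  · rw [dif_neg h]; simp

/-- `Z a L = Y_{[a,a+L]}`. -/
noncomputable def Zint (n a : ℕ) : ℕ → Nring n
  | 0 => 1
  | L + 1 => Ygen n (a + L) * Zint n a L

theorem Yint_eq (n a L : ℕ) : Yint n a (a + L) = Zint n a L := by
  induction L with
  | zero => simp [Yint, Zint]
  | succ L ih =>
    rw [Zint, ← ih]
    have e1 : a + (L + 1) - a = L + 1 := by omega
    have e2 : a + L - a = L := by omega
    simp [Yint, e1, e2, List.range'_concat]

theorem Zint_add (n a L M : ℕ) : Zint n a (L + M) = Zint n (a + L) M * Zint n a L := by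
  induction M with
  | zero => simp [Zint]
  | succ M ih => rw [← add_assoc, Zint, ih, Zint, mul_assoc, add_assoc]

theorem Zint_comm_hi (n a L b : ℕ) (h : a + L + 1 ≤ b) :
    Commute (Zint n a L) (Ygen n b) := by
  induction L with
  | zero => exact Commute.one_left _
  | succ L ih => exact (Ygen_comm n _ _ (by omega)).mul_left (ih (by omega))

theorem Zint_comm_lo (n a L b : ℕ) (h : b + 2 ≤ a) :
    Commute (Zint n a L) (Ygen n b) := by
  induction L with
  | zero => exact Commute.one_left _
  | succ L ih => exact (Ygen_comm n _ _ (by omega)).symm.mul_left ih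

theorem Zint_comm (n a L b M : ℕ) (h : a + L + 1 ≤ b) :
    Commute (Zint n a L) (Zint n b M) := by
  induction M with
  | zero => exact Commute.one_right _
  | succ M ih => exact (Zint_comm_hi n _ _ _ (by omega)).mul_right ih

theorem Zint_key (n s L : ℕ) :
    Zint n s L * Zint n (s+1) L * Ygen n s = Ygen n (s+L) * (Zint n s L * Zint n (s+1) L) := by
  induction L with
  | zero => simp [Zint]
  | succ L ih =>
    have hc := (Zint_comm_hi n s L (s+1+L) (by omega)).eq
    have e : s + 1 + L = s + L + 1 := by omega
    have hz : Zint n s (L+1) * Zint n (s+1) (L+1)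
        = Ygen n (s+L) * Ygen n (s+L+1) * (Zint n s L * Zint n (s+1) L) := by
      simp only [Zint]
      rw [mul_assoc, ← mul_assoc (Zint n s L), hc, e]
      simp only [mul_assoc]
    rw [hz, mul_assoc, ih, ← mul_assoc, Ygen_braid, ← add_assoc]
    simp only [mul_assoc]

/-- Staircase product of `k` factors of length `L`, starting at `i`. -/
noncomputable def Pint (n L i : ℕ) : ℕ → Nring n
  | 0 => 1
  | k + 1 => Pint n L i k * Zint n (i + k) L

theorem Yintk_eq (n i L k j : ℕ) (h : j + 1 - k = i + L) :
    Yintk n i j k = Pint n L i k := by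
  unfold Yintk
  rw [h]
  clear h
  induction k with
  | zero => simp [Pint]
  | succ k ih =>
    rw [List.range_succ, List.map_append, List.prod_append, ih, Pint, ← Yint_eq]
    simp [add_right_comm]

theorem Pint_add (n L i k l : ℕ) : Pint n L i (k + l) = Pint n L i k * Pint n L (i + k) l := by
  induction l with
  | zero => simp [Pint]
  | succ l ih => rw [← add_assoc, Pint, ih, Pint, mul_assoc, add_assoc]

theorem Pint_comm_hi (n L i k b : ℕ) (h : i + k + L ≤ b) :
    Commute (Pint n L i k) (Ygen n b) := by
  induction k with
  | zero => exact Commute.one_left _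
  | succ k ih => exact (ih (by omega)).mul_left (Zint_comm_hi n _ _ _ (by omega))

theorem Pint_comm_lo (n L i k b : ℕ) (h : b + 2 ≤ i) :
    Commute (Pint n L i k) (Ygen n b) := by
  induction k with
  | zero => exact Commute.one_left _
  | succ k ih => exact ih.mul_left (Zint_comm_lo n _ _ _ (by omega))

theorem Pint_shift (n L i k s : ℕ) (h : i ≤ s) (h' : s + 1 < i + k) :
    Pint n L i k * Ygen n s = Ygen n (s + L) * Pint n L i k := by
  obtain ⟨u, rfl⟩ := Nat.exists_eq_add_of_le h
  obtain ⟨v, rfl⟩ : ∃ v, k = u + 1 + 1 + v := ⟨k - u - 2, by omega⟩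
  have hlo := (Pint_comm_lo n L (i + (u+1+1)) v (i+u) (by omega)).eq
  have hhi := (Pint_comm_hi n L i u (i+u+L) (by omega)).eq
  have hk := Zint_key n (i+u) L
  rw [Pint_add, Pint, Pint, ← add_assoc i u 1, mul_assoc, hlo, ← mul_assoc,
    mul_assoc (Pint n L i u), mul_assoc (Pint n L i u), hk, ← mul_assoc (Pint n L i u), hhi]
  simp only [mul_assoc]

theorem Pint_shiftZ (n L i k s M : ℕ) (h : i ≤ s) (h' : s + M < i + k) :
    Pint n L i k * Zint n s M = Zint n (s + L) M * Pint n L i k := by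
  induction M with
  | zero => simp [Zint]
  | succ M ih =>
    rw [Zint, ← mul_assoc, Pint_shift n L i k _ (by omega) (by omega), mul_assoc,
      ih (by omega), Zint, mul_assoc, add_right_comm s M L]

theorem Pint_shiftP (n L i k M l : ℕ) (h' : l + M ≤ k) :
    Pint n L i k * Pint n M i l = Pint n M (i + L) l * Pint n L i k := by
  induction l with
  | zero => simp [Pint]
  | succ l ih =>
    rw [Pint, ← mul_assoc, ih (by omega), mul_assoc,
      Pint_shiftZ n L i k _ M (by omega) (by omega), Pint, mul_assoc, add_right_comm i l L]

theorem Pint_comm_Z (n L i k b M : ℕ) (h : i + k + L ≤ b) :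
    Commute (Pint n L i k) (Zint n b M) := by
  induction M with
  | zero => exact Commute.one_right _
  | succ M ih => exact (Pint_comm_hi n _ _ _ _ (by omega)).mul_right ih

theorem Pint_split (n L M i k : ℕ) :
    Pint n (L + M) i k = Pint n M (i + L) k * Pint n L i k := by
  induction k with
  | zero => simp [Pint]
  | succ k ih =>
    have hc := (Pint_comm_Z n L i k (i+k+L) M (by omega)).eq
    rw [Pint, ih, Zint_add, Pint, Pint, mul_assoc, ← mul_assoc (Pint n L i k), hc,
      add_right_comm i L k]
    simp only [mul_assoc]

/-- In `N(n)`, if `1 ≤ i < j ≤ n` and `0 < k' < k ≤ j - i`, then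
`Y_{[i,j];k} Y_{[i,i+k-1];k'} = Y_{[i,j];k'} Y_{[i+k',j];k-k'}`. -/
theorem Yintk_factorisation (n : ℕ) (hn : 2 ≤ n) (i j k k' : ℕ)
    (h1 : 1 ≤ i) (h2 : i < j) (h3 : j ≤ n)
    (h4 : 0 < k') (h5 : k' < k) (h6 : k ≤ j - i) :
    Yintk n i j k * Yintk n i (i + k - 1) k' = Yintk n i j k' * Yintk n (i + k') j (k - k') := by
  obtain ⟨l, rfl⟩ : ∃ l, k = k' + l := ⟨k - k', by omega⟩
  obtain ⟨L, rfl⟩ : ∃ L, j = i + L + (k' + l) - 1 := ⟨j + 1 - (k' + l) - i, by omega⟩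
  rw [Yintk_eq n i L _ _ (by omega), Yintk_eq n i l k' _ (by omega),
    Yintk_eq n i (L + l) k' _ (by omega), Yintk_eq n (i + k') L _ _ (by omega),
    Pint_shiftP n L i _ l k' le_rfl, Pint_split, Nat.add_sub_cancel_left, Pint_add, mul_assoc]
end

section
/- The ring X(n) is free as a ℤ-module. -/
/-- Index type for the generators `X_{i,j}`, `1 ≤ i < j ≤ n`. -/
abbrev XIdx (n : ℕ) := {p : ℕ × ℕ // 1 ≤ p.1 ∧ p.1 < p.2 ∧ p.2 ≤ n}

/-- The element `X_{i,j}` of the free algebra, with the conventions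
`X_{a,b} = (-1)^(a-b-1) X_{b,a}` for `a > b` and `X_{a,a} = 0`. -/
noncomputable def xf (n : ℕ) (i j : ℕ) : FreeAlgebra ℤ (XIdx n) :=
  if h : 1 ≤ i ∧ i < j ∧ j ≤ n then FreeAlgebra.ι ℤ ⟨(i, j), h⟩
  else if h : 1 ≤ j ∧ j < i ∧ i ≤ n then ((-1 : ℤ) ^ (i - j - 1)) • FreeAlgebra.ι ℤ ⟨(j, i), h⟩
  else 0

/-- The defining relations of the signed nilcactus algebra `X(n)`. -/
inductive XRel (n : ℕ) : FreeAlgebra ℤ (XIdx n) → FreeAlgebra ℤ (XIdx n) → Prop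
  | sq (i j : ℕ) (h1 : 1 ≤ i) (h2 : i < j) (h3 : j ≤ n) :
      XRel n (xf n i j * xf n i j) 0
  | contain (i j i' j' : ℕ) (h1 : 1 ≤ i) (h2 : i < j) (h3 : j ≤ n)
      (h1' : 1 ≤ i') (h2' : i' < j') (h3' : j' ≤ n)
      (hsub : Set.Icc i' j' ⊆ Set.Icc i j) :
      XRel n (xf n i j * xf n i' j')
        (((-1 : ℤ) ^ ((j - i - 1) * (j' - i' - 1))) •
          (xf n (i + j - i') (i + j - j') * xf n i j))
  | disj (i j i' j' : ℕ) (h1 : 1 ≤ i) (h2 : i < j) (h3 : j ≤ n)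
      (h1' : 1 ≤ i') (h2' : i' < j') (h3' : j' ≤ n)
      (hd : Set.Icc i j ∩ Set.Icc i' j' = ∅) :
      XRel n (xf n i j * xf n i' j')
        (((-1 : ℤ) ^ ((j - i - 1) * (j' - i' - 1))) • (xf n i' j' * xf n i j))

/-- The signed nilcactus algebra `X(n)`. -/
abbrev Xring (n : ℕ) := RingQuot (XRel n)

namespace Nilcactus

/-- The reversal of the interval `[i,j]`. -/
def rev (i j : ℕ) : Equiv.Perm ℕ :=
  Function.Involutive.toPerm (fun k => if i ≤ k ∧ k ≤ j then i + j - k else k) (by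
    intro k
    dsimp only
    split_ifs <;> omega)

theorem rev_apply (i j k : ℕ) : rev i j k = if i ≤ k ∧ k ≤ j then i + j - k else k := rfl

theorem mem_map_rev (i j k : ℕ) (A : Finset ℕ) :
    k ∈ A.map (rev i j).toEmbedding ↔ rev i j k ∈ A := by
  rw [Finset.mem_map_equiv]; rfl

variable {n : ℕ}

/-- The interval of a letter. -/
def itv (a : XIdx n) : Finset ℕ := Finset.Icc a.1.1 a.1.2

/-- The reversal of a letter. -/
def rv (a : XIdx n) : Equiv.Perm ℕ := rev a.1.1 a.1.2

/-- The degree of a letter. -/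
def dg (a : XIdx n) : ℕ := a.1.2 - a.1.1 - 1

/-- The move `a b → c a`. -/
def Mv (a b c : XIdx n) : Prop :=
  ((a.1.2 < b.1.1 ∨ b.1.2 < a.1.1) ∧ c = b) ∨
  (a.1.1 ≤ b.1.1 ∧ b.1.2 ≤ a.1.2 ∧ c.1.1 = a.1.1 + a.1.2 - b.1.2 ∧ c.1.2 = a.1.1 + a.1.2 - b.1.1)

theorem Mv.itv_eq {a b c : XIdx n} (h : Mv a b c) :
    itv c = (itv b).map (rv a).toEmbedding := by
  obtain ⟨⟨i, j⟩, ha⟩ := a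
  obtain ⟨⟨i', j'⟩, hb⟩ := b
  obtain ⟨⟨p, q⟩, hc⟩ := c
  simp only [Mv, Subtype.mk.injEq, Prod.mk.injEq] at *
  ext k
  simp only [itv, rv, mem_map_rev, rev_apply, Finset.mem_Icc]
  split_ifs <;> omega

theorem Mv.itv_fix {a b c : XIdx n} (h : Mv a b c) :
    (itv a).map (rv c).toEmbedding = itv a := by
  obtain ⟨⟨i, j⟩, ha⟩ := a
  obtain ⟨⟨i', j'⟩, hb⟩ := b
  obtain ⟨⟨p, q⟩, hc⟩ := c
  simp only [Mv, Subtype.mk.injEq, Prod.mk.injEq] at *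
  ext k
  simp only [itv, rv, mem_map_rev, rev_apply, Finset.mem_Icc]
  split_ifs <;> omega

theorem Mv.rv_comm {a b c : XIdx n} (h : Mv a b c) (k : ℕ) :
    rv a (rv b k) = rv c (rv a k) := by
  obtain ⟨⟨i, j⟩, ha⟩ := a
  obtain ⟨⟨i', j'⟩, hb⟩ := b
  obtain ⟨⟨p, q⟩, hc⟩ := c
  simp only [Mv, Subtype.mk.injEq, Prod.mk.injEq] at *
  simp only [rv, rev_apply]
  split_ifs <;> omega

/-- The list of subsets attached to a word. -/
def sets : List (XIdx n) → List (Finset ℕ)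
  | [] => []
  | a :: w => itv a :: (sets w).map (Finset.map (rv a).toEmbedding)

/-- The permutation attached to a word. -/
def prm : List (XIdx n) → Equiv.Perm ℕ
  | [] => 1
  | a :: w => rv a * prm w

theorem sets_append (u v : List (XIdx n)) :
    sets (u ++ v) = sets u ++ (sets v).map (Finset.map (prm u).toEmbedding) := by
  induction u with
  | nil =>
    have : ∀ A : Finset ℕ, A.map (1 : Equiv.Perm ℕ).toEmbedding = A := fun A => by
      ext k; rw [Finset.mem_map_equiv]; rfl
    have h2 : (Finset.map (1 : Equiv.Perm ℕ).toEmbedding) = id := funext this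
    simp only [sets, prm, List.nil_append]
    rw [h2, List.map_id]
  | cons a u ih =>
    simp only [List.cons_append, sets, ih, List.map_append, List.map_map, prm]
    congr 2
    apply List.map_congr_left
    intro A _
    simp only [Function.comp, Finset.map_map]
    rfl

/-- The swap sign. -/
def sgn (A B : Finset ℕ) : ℤ :=
  (-1) ^ ((A.card - 2) * (B.card - 2) +
    if A ⊆ B then A.card - 2 else if B ⊆ A then B.card - 2 else 0)

theorem sgn_mul_self (A B : Finset ℕ) : sgn A B * sgn A B = 1 := by
  rw [sgn, ← mul_pow]; simp

theorem sgn_comm (A B : Finset ℕ) : sgn A B = sgn B A := by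
  unfold sgn
  rw [mul_comm (A.card - 2)]
  congr 2
  split_ifs with h1 h2
  · rw [Finset.Subset.antisymm h1 h2]
  all_goals rfl

theorem sgn_map (A B : Finset ℕ) (f : ℕ ↪ ℕ) : sgn (A.map f) (B.map f) = sgn A B := by
  simp [sgn]

theorem sgn_self (A : Finset ℕ) : sgn A A = 1 := by
  simp only [sgn, subset_refl, if_true]
  apply Even.neg_one_pow
  rw [← Nat.mul_succ]
  exact Nat.even_mul_succ_self _

/-- The half sign. -/
def eps (A B : Finset ℕ) : ℤ := if Encodable.encode A < Encodable.encode B then sgn A B else 1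

theorem eps_sq (A B : Finset ℕ) : eps A B * eps A B = 1 := by
  unfold eps; split_ifs <;> simp [sgn_mul_self]

theorem eps_swap (A B : Finset ℕ) : eps A B = sgn A B * eps B A := by
  unfold eps
  rcases lt_trichotomy (Encodable.encode A) (Encodable.encode B) with h | h | h
  · simp [h, h.not_gt]
  · rw [Encodable.encode_inj] at h
    subst h
    simp [sgn_self]
  · simp [h, h.not_gt, sgn_comm B A, sgn_mul_self]

/-- The sign of a list of subsets. -/
def lsgn : List (Finset ℕ) → ℤ
  | [] => 1
  | A :: l => (l.map (eps A)).prod * lsgn l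

theorem lsgn_swap (l₁ l₂ : List (Finset ℕ)) (A B : Finset ℕ) :
    lsgn (l₁ ++ A :: B :: l₂) = sgn A B * lsgn (l₁ ++ B :: A :: l₂) := by
  induction l₁ with
  | nil =>
    simp only [List.nil_append, lsgn, List.map_cons, List.prod_cons]
    rw [eps_swap A B]; ring
  | cons C l ih =>
    simp only [List.cons_append, lsgn, ih, List.map_append, List.map_cons, List.prod_append,
      List.prod_cons]
    ring

theorem lsgn_sq (l : List (Finset ℕ)) : lsgn l * lsgn l = 1 := by
  induction l with
  | nil => simp [lsgn]
  | cons A l ih =>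
    have : ∀ m : List (Finset ℕ), (m.map (eps A)).prod * (m.map (eps A)).prod = 1 := by
      intro m
      induction m with
      | nil => simp
      | cons B m ih =>
        simp only [List.map_cons, List.prod_cons]
        rw [mul_mul_mul_comm, eps_sq, ih, one_mul]
    simp only [lsgn]
    rw [mul_mul_mul_comm, this, ih, one_mul]

/-- The sign of a word. -/
def wsgn (w : List (XIdx n)) : ℤ := lsgn (sets w)

theorem wsgn_sq (w : List (XIdx n)) : wsgn w * wsgn w = 1 := lsgn_sq _

theorem wsgn_swap (u v : List (XIdx n)) {a b c : XIdx n} (h : Mv a b c) :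
    wsgn (u ++ a :: b :: v) = sgn (itv a) (itv c) * wsgn (u ++ c :: a :: v) := by
  unfold wsgn
  rw [sets_append, sets_append]
  simp only [sets, List.map_cons, List.map_map]
  rw [h.itv_fix, ← h.itv_eq, lsgn_swap, sgn_map]
  congr 5
  apply List.map_congr_left
  intro A _
  simp only [Function.comp]
  congr 1
  rw [Finset.map_map, Finset.map_map]
  congr 1
  ext k
  exact h.rv_comm k

/-- Elementary relations between words, `none` playing the part of zero. -/
inductive Step (n : ℕ) : Option (List (XIdx n)) → Option (List (XIdx n)) → Prop
  | swap (u v : List (XIdx n)) (a b c : XIdx n) (h : Mv a b c) :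
      Step n (some (u ++ a :: b :: v)) (some (u ++ c :: a :: v))
  | sq (u v : List (XIdx n)) (a : XIdx n) : Step n (some (u ++ a :: a :: v)) none

/-- Nonzero classes of words. -/
abbrev Cls (n : ℕ) := {t : Quot (Step n) // t ≠ Quot.mk _ none}

open Classical in
/-- The basis element of a class, zero for the zero class. -/
noncomputable def bas (t : Quot (Step n)) : Cls n →₀ ℤ :=
  if h : t ≠ Quot.mk _ none then Finsupp.single ⟨t, h⟩ 1 else 0

/-- The monomial of a word. -/
noncomputable def wd (w : List (XIdx n)) : FreeAlgebra ℤ (XIdx n) :=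
  (w.map (FreeAlgebra.ι ℤ)).prod

theorem basis_eq (w : FreeMonoid (XIdx n)) :
    FreeAlgebra.basisFreeMonoid ℤ (XIdx n) w = wd w.toList := by
  simp only [FreeAlgebra.basisFreeMonoid, Module.Basis.map_apply, Finsupp.coe_basisSingleOne]
  rw [LinearEquiv.symm_apply_eq]
  simp only [wd, LinearEquiv.trans_apply]
  have : (FreeAlgebra.equivMonoidAlgebraFreeMonoid.toLinearEquiv
      ((w.toList.map (FreeAlgebra.ι ℤ)).prod) : MonoidAlgebra ℤ (FreeMonoid (XIdx n))) =
      MonoidAlgebra.of ℤ _ w := by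
    induction w using FreeMonoid.inductionOn' with
    | one => simp [MonoidAlgebra.one_def]
    | of_mul a w ih =>
      have ih' : (FreeAlgebra.equivMonoidAlgebraFreeMonoid
        ((w.toList.map (FreeAlgebra.ι ℤ)).prod) : MonoidAlgebra ℤ (FreeMonoid (XIdx n))) =
        MonoidAlgebra.of ℤ _ w := ih
      show FreeAlgebra.equivMonoidAlgebraFreeMonoid _ = _
      rw [FreeMonoid.toList_mul, FreeMonoid.toList_of, List.singleton_append, List.map_cons,
        List.prod_cons, map_mul, ih', map_mul]
      congr 1
      simp [FreeAlgebra.equivMonoidAlgebraFreeMonoid]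
  rw [this]
  rfl

/-- The comparison map. -/
noncomputable def F (n : ℕ) : FreeAlgebra ℤ (XIdx n) →ₗ[ℤ] (Cls n →₀ ℤ) :=
  (FreeAlgebra.basisFreeMonoid ℤ (XIdx n)).constr ℤ
    (fun w => wsgn w.toList • bas (Quot.mk _ (some w.toList)))

theorem F_wd (w : List (XIdx n)) : F n (wd w) = wsgn w • bas (Quot.mk _ (some w)) := by
  have := (FreeAlgebra.basisFreeMonoid ℤ (XIdx n)).constr_basis ℤ
    (fun w => wsgn w.toList • bas (Quot.mk _ (some w.toList))) (FreeMonoid.ofList w)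
  rw [basis_eq] at this
  exact this

theorem span_wd : Submodule.span ℤ (Set.range (wd (n := n))) = ⊤ := by
  have h := (FreeAlgebra.basisFreeMonoid ℤ (XIdx n)).span_eq
  suffices hs : Set.range (wd (n := n)) = Set.range (FreeAlgebra.basisFreeMonoid ℤ (XIdx n)) by
    rw [hs]; exact h
  ext x
  constructor
  · rintro ⟨w, rfl⟩; exact ⟨FreeMonoid.ofList w, basis_eq _⟩
  · rintro ⟨w, rfl⟩; exact ⟨w.toList, (basis_eq _).symm⟩

theorem F_bilin {x y : FreeAlgebra ℤ (XIdx n)}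
    (h : ∀ u v, F n (wd u * x * wd v) = F n (wd u * y * wd v)) (p q : FreeAlgebra ℤ (XIdx n)) :
    F n (p * x * q) = F n (p * y * q) := by
  have hp : p ∈ Submodule.span ℤ (Set.range (wd (n := n))) := by rw [span_wd]; trivial
  have hq : q ∈ Submodule.span ℤ (Set.range (wd (n := n))) := by rw [span_wd]; trivial
  induction hp using Submodule.span_induction with
  | mem p hp =>
    obtain ⟨u, rfl⟩ := hp
    induction hq using Submodule.span_induction with
    | mem q hq => obtain ⟨v, rfl⟩ := hq; exact h u v
    | zero => simp
    | add a b _ _ ha hb => simp only [mul_add, map_add, ha, hb]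
    | smul k a _ ha => simp only [mul_smul_comm, map_smul, ha]
  | zero => simp
  | add a b _ _ ha hb => simp only [add_mul, map_add, ha, hb]
  | smul k a _ ha => simp only [smul_mul_assoc, map_smul, ha]

theorem wd_two (u v : List (XIdx n)) (a b : XIdx n) :
    wd u * (FreeAlgebra.ι ℤ a * FreeAlgebra.ι ℤ b) * wd v = wd (u ++ a :: b :: v) := by
  simp [wd, mul_assoc]

theorem xf_pos (a : XIdx n) : xf n a.1.1 a.1.2 = FreeAlgebra.ι ℤ a := by
  rw [xf, dif_pos a.2]

theorem xf_neg (a : XIdx n) : xf n a.1.2 a.1.1 = (-1 : ℤ) ^ dg a • FreeAlgebra.ι ℤ a := by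
  rw [xf, dif_neg (by have := a.2; omega), dif_pos a.2]; rfl

theorem card_itv (a : XIdx n) : (itv a).card - 2 = dg a := by
  simp only [itv, dg, Nat.card_Icc]; omega

theorem sgn_itv_disj {a b : XIdx n} (h : a.1.2 < b.1.1 ∨ b.1.2 < a.1.1) :
    sgn (itv a) (itv b) = (-1) ^ (dg a * dg b) := by
  have ha := a.2
  have hb := b.2
  rw [sgn, card_itv, card_itv, if_neg, if_neg, add_zero]
  · simp only [itv]; rw [Finset.Icc_subset_Icc_iff (by omega)]; omega
  · simp only [itv]; rw [Finset.Icc_subset_Icc_iff (by omega)]; omega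

theorem sgn_itv_sub {a b : XIdx n} (h : itv b ⊆ itv a) :
    sgn (itv a) (itv b) = (-1) ^ (dg a * dg b) * (-1) ^ dg b := by
  rw [sgn_comm, sgn, card_itv, card_itv, if_pos h, pow_add, mul_comm (dg b)]

/-- Normal form of the defining relations. -/
theorem XRel_cases {x y : FreeAlgebra ℤ (XIdx n)} (h : XRel n x y) :
    (∃ a, x = FreeAlgebra.ι ℤ a * FreeAlgebra.ι ℤ a ∧ y = 0) ∨
    (∃ a b c, Mv a b c ∧ x = FreeAlgebra.ι ℤ a * FreeAlgebra.ι ℤ b ∧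
      y = sgn (itv a) (itv c) • (FreeAlgebra.ι ℤ c * FreeAlgebra.ι ℤ a)) := by
  cases h with
  | sq i j h1 h2 h3 =>
    left
    refine ⟨⟨(i, j), h1, h2, h3⟩, ?_, rfl⟩
    rw [← xf_pos]
  | contain i j i' j' h1 h2 h3 h1' h2' h3' hsub =>
    right
    rw [Set.Icc_subset_Icc_iff h2'.le] at hsub
    let a : XIdx n := ⟨(i, j), h1, h2, h3⟩
    let b : XIdx n := ⟨(i', j'), h1', h2', h3'⟩
    let c : XIdx n := ⟨(i + j - j', i + j - i'), by omega, by dsimp only; omega, by dsimp only; omega⟩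
    have hdg : dg c = j' - i' - 1 := by simp only [dg, c]; omega
    refine ⟨a, b, c, Or.inr ⟨hsub.1, hsub.2, rfl, rfl⟩, ?_, ?_⟩
    · rw [← xf_pos a, ← xf_pos b]
    · have hc : xf n (i + j - i') (i + j - j') = _ := xf_neg c
      have ha : xf n i j = _ := xf_pos a
      rw [hc, ha, sgn_itv_sub, smul_mul_assoc, smul_smul, hdg]
      · rfl
      · simp only [itv, a, c]
        apply Finset.Icc_subset_Icc <;> omega
  | disj i j i' j' h1 h2 h3 h1' h2' h3' hd =>
    right
    let a : XIdx n := ⟨(i, j), h1, h2, h3⟩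
    let b : XIdx n := ⟨(i', j'), h1', h2', h3'⟩
    have hd' : j < i' ∨ j' < i := by
      by_contra hcon
      have : max i i' ∈ Set.Icc i j ∩ Set.Icc i' j' := by
        simp only [Set.mem_inter_iff, Set.mem_Icc]; omega
      rw [hd] at this
      exact this
    refine ⟨a, b, b, Or.inl ⟨hd', rfl⟩, ?_, ?_⟩
    · rw [← xf_pos a, ← xf_pos b]
    · rw [sgn_itv_disj hd', ← xf_pos a, ← xf_pos b]
      rfl

theorem F_rel {x y : FreeAlgebra ℤ (XIdx n)} (h : XRel n x y) (p q : FreeAlgebra ℤ (XIdx n)) :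
    F n (p * x * q) = F n (p * y * q) := by
  refine F_bilin (fun u v => ?_) p q
  rcases XRel_cases h with ⟨a, rfl, rfl⟩ | ⟨a, b, c, hm, rfl, rfl⟩
  · rw [wd_two, F_wd, Quot.sound (Step.sq u v a)]
    simp [bas]
  · rw [mul_smul_comm, smul_mul_assoc, map_smul, wd_two, wd_two, F_wd, F_wd,
      Quot.sound (Step.swap u v a b c hm), wsgn_swap u v hm, smul_smul]

theorem F_Rel {x y : FreeAlgebra ℤ (XIdx n)} (h : RingQuot.Rel (XRel n) x y) :
    ∀ p q, F n (p * x * q) = F n (p * y * q) := by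
  induction h with
  | of h => exact F_rel h
  | add_left _ ih => intro p q; simp only [mul_add, add_mul, map_add, ih]
  | @mul_left _ _ c _ ih =>
    intro p q
    have := ih p (c * q)
    simpa only [mul_assoc] using this
  | @mul_right c _ _ _ ih =>
    intro p q
    have := ih (p * c) q
    simpa only [mul_assoc] using this

/-- The quotient map. -/
noncomputable def mk (n : ℕ) : FreeAlgebra ℤ (XIdx n) →ₐ[ℤ] Xring n := RingQuot.mkAlgHom ℤ (XRel n)

theorem F_of_mk_eq {x y : FreeAlgebra ℤ (XIdx n)} (h : mk n x = mk n y) : F n x = F n y := by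
  have h' : (Quot.mk (RingQuot.Rel (XRel n)) x) = Quot.mk _ y := by
    simpa [mk, RingQuot.mkAlgHom_def, RingQuot.mkRingHom_def] using h
  have := congrArg (Quot.lift (F n) (fun a b hab => by simpa using F_Rel hab 1 1)) h'
  exact this

theorem XRel_swap {a b c : XIdx n} (h : Mv a b c) :
    mk n (FreeAlgebra.ι ℤ a * FreeAlgebra.ι ℤ b) =
      sgn (itv a) (itv c) • mk n (FreeAlgebra.ι ℤ c * FreeAlgebra.ι ℤ a) := by
  rw [← map_smul]
  have ha := a.2
  have hb := b.2
  have hcc := c.2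
  rcases h with ⟨h, rfl⟩ | ⟨h1, h2, h3, h4⟩
  · have := RingQuot.mkAlgHom_rel ℤ (XRel.disj a.1.1 a.1.2 c.1.1 c.1.2 a.2.1 a.2.2.1 a.2.2.2
      c.2.1 c.2.2.1 c.2.2.2 (by
        ext k; simp only [Set.mem_inter_iff, Set.mem_Icc, Set.mem_empty_iff_false, iff_false]; omega))
    rw [xf_pos, xf_pos] at this
    rw [sgn_itv_disj h]
    exact this
  · have := RingQuot.mkAlgHom_rel ℤ (XRel.contain a.1.1 a.1.2 b.1.1 b.1.2 a.2.1 a.2.2.1 a.2.2.2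
      b.2.1 b.2.2.1 b.2.2.2 (Set.Icc_subset_Icc h1 h2))
    rw [← h3, ← h4, xf_pos, xf_pos, xf_neg, smul_mul_assoc, smul_smul] at this
    have hdg : dg c = b.1.2 - b.1.1 - 1 := by simp only [dg]; omega
    rw [sgn_itv_sub, hdg]
    · rw [hdg] at this
      exact this
    · simp only [itv]
      apply Finset.Icc_subset_Icc <;> omega

theorem XRel_sq (a : XIdx n) : mk n (FreeAlgebra.ι ℤ a * FreeAlgebra.ι ℤ a) = 0 := by
  have := RingQuot.mkAlgHom_rel ℤ (XRel.sq a.1.1 a.1.2 a.2.1 a.2.2.1 a.2.2.2)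
  rw [xf_pos, map_zero] at this
  exact this

/-- The signed monomial of an optional word. -/
noncomputable def G₀ (n : ℕ) : Option (List (XIdx n)) → FreeAlgebra ℤ (XIdx n)
  | none => 0
  | some w => wsgn w • wd w

theorem G₀_step {p q : Option (List (XIdx n))} (h : Step n p q) : mk n (G₀ n p) = mk n (G₀ n q) := by
  cases h with
  | swap u v a b c h =>
    simp only [G₀, ← wd_two]
    rw [map_zsmul, map_mul, map_mul]
    rw [map_zsmul, map_mul (mk n) (_ * _), map_mul (mk n) (wd u), XRel_swap h, wsgn_swap u v h, mul_smul_comm, smul_mul_assoc, smul_smul,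
      mul_right_comm, sgn_mul_self, one_mul]
  | sq u v a =>
    simp only [G₀, ← wd_two]
    rw [map_zsmul, map_mul, map_mul]
    rw [XRel_sq]; simp

/-- The signed monomial of a class. -/
noncomputable def G (n : ℕ) (t : Quot (Step n)) : FreeAlgebra ℤ (XIdx n) := G₀ n t.out

theorem mk_G (p : Option (List (XIdx n))) : mk n (G n (Quot.mk _ p)) = mk n (G₀ n p) := by
  have h : ∀ p, Quot.lift (fun p => mk n (G₀ n p)) (fun _ _ h => G₀_step h) (Quot.mk _ p)
    = mk n (G₀ n p) := fun _ => rfl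
  rw [G, ← h, Quot.out_eq]

theorem F_G (t : Quot (Step n)) : F n (G n t) = bas t := by
  unfold G
  conv_rhs => rw [← Quot.out_eq t]
  cases Quot.out t with
  | none => simp [G₀, bas]
  | some w => simp only [G₀, map_smul, F_wd, smul_smul, wsgn_sq, one_smul]

/-- The candidate isomorphism. -/
noncomputable def Phi (n : ℕ) : (Cls n →₀ ℤ) →ₗ[ℤ] FreeAlgebra ℤ (XIdx n) :=
  Finsupp.linearCombination ℤ (fun t => G n t.1)

theorem F_Phi (x : Cls n →₀ ℤ) : F n (Phi n x) = x := by
  have : (F n).comp (Phi n) = LinearMap.id := by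
    ext t : 2
    simp only [LinearMap.comp_apply, Phi, Finsupp.lsingle_apply,
      Finsupp.linearCombination_single, one_smul, F_G, LinearMap.id_apply]
    rw [bas, dif_pos t.2]
  exact LinearMap.congr_fun this x

theorem Psi_injective : Function.Injective ((mk n).toLinearMap.comp (Phi n)) := by
  intro x y h
  have := F_of_mk_eq h
  exact (F_Phi x).symm.trans (this.trans (F_Phi y))

theorem Psi_surjective : Function.Surjective ((mk n).toLinearMap.comp (Phi n)) := by
  intro x
  obtain ⟨p, rfl⟩ := RingQuot.mkAlgHom_surjective ℤ (XRel n) x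
  have hp : p ∈ Submodule.span ℤ (Set.range (wd (n := n))) := by rw [span_wd]; trivial
  change ∃ y, mk n (Phi n y) = mk n p
  induction hp using Submodule.span_induction with
  | mem p hp =>
    obtain ⟨w, rfl⟩ := hp
    have key : mk n (wd w) = wsgn w • mk n (G n (Quot.mk _ (some w))) := by
      rw [mk_G]
      simp only [G₀]
      rw [map_zsmul, smul_smul, wsgn_sq, one_smul]
    by_cases h : (Quot.mk (Step n) (some w)) = Quot.mk _ none
    · refine ⟨0, ?_⟩
      rw [key, h, mk_G]; simp [G₀]
    · refine ⟨wsgn w • Finsupp.single ⟨_, h⟩ 1, ?_⟩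
      rw [key, map_zsmul, map_zsmul]
      simp [Phi]
  | zero => exact ⟨0, by simp⟩
  | add a b _ _ ha hb =>
    obtain ⟨y, hy⟩ := ha
    obtain ⟨z, hz⟩ := hb
    exact ⟨y + z, by rw [map_add, map_add, map_add, hy, hz]⟩
  | smul k a _ ha =>
    obtain ⟨y, hy⟩ := ha
    exact ⟨k • y, by rw [map_zsmul, map_zsmul, map_zsmul, hy]⟩

end Nilcactus

/-- The ring `X(n)` is free as a ℤ-module. -/
theorem Xring_free (n : ℕ) (hn : 2 ≤ n) : Module.Free ℤ (Xring n) := by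
  exact Module.Free.of_equiv
    (LinearEquiv.ofBijective _ ⟨Nilcactus.Psi_injective, Nilcactus.Psi_surjective⟩)
end
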